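/- Let N be a positive squarefree integer, let P = (a, b) be a non-torsion integral point of E_N(ℚ), and let n ≥ 3 be an odd integer such that nP is integral. Then a < n²·N (and hence, since every real point of E_N has x-coordinate greater than −N, one has |a| < n²·N). -/

import Mathlib

/-- The congruent number curve `E_N : y² = x³ - N²x` over `ℚ`. -/
def congruentCurve (N : ℕ) : WeierstrassCurve.Affine ℚ :=
  { a₁ := 0, a₂ := 0, a₃ := 0, a₄ := -(N : ℚ) ^ 2, a₆ := 0 }

/-- A rational point on a Weierstrass curve over `ℚ` is integral if it is an affine point
whose `x`-coordinate is an integer. -/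
def IsIntegralPoint {W : WeierstrassCurve.Affine ℚ} (P : W.Point) : Prop :=
  ∃ (x y : ℚ) (h : W.Nonsingular x y),
    P = WeierstrassCurve.Affine.Point.some x y h ∧ x.den = 1

/-!
Suppose `n² N ≤ a` and write `x(kP) = X_k / e_k²` in lowest terms.

The reciprocals `c_k = a / x(kP)` satisfy a recurrence which, as `N / a` tends to `0`, becomes
`c_{k+2} - 2 c_{k+1} + c_k = 2`, with solution `k²`. Since `n⁴ (N / a)² ≤ 1`, the perturbation is
small enough to leave `c_k ≥ k` for `k ≤ n`. Hence `x(kP) ≤ a / 2`, and so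
`|X_k - a e_k²| ≥ a e_k² / 2`, for `2 ≤ k ≤ n`.

On the other hand, `x((k+1)P) x((k-1)P) = ((a x(kP) + N²) / (x(kP) - a))²` gives
`X_k - a e_k² = γ e_{k+1} e_{k-1}`, where `γ` measures the cancellation in this fraction. As `N` is
squarefree, `γ` divides `2N²`; for even `k` it even divides `2`, because then `x(kP)` and
`x(kP) - N` are squares. So `a e_k² ≤ 4N² e_{k+1} e_{k-1}` in general and
`a e_k² ≤ 4 e_{k+1} e_{k-1}` for even `k`. With `e_1 = 1` and `a > 4N`, this forces `e_k` to grow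
at even `k` and not to shrink at odd `k`; thus `e_n > 1` and `nP` is not integral.
-/

section Recurrence

variable {K : Type*} [Field K] [LinearOrder K] [IsStrictOrderedRing K]

lemma one_sub_div_one_add_sq_le_one {t : K} (ht : 0 ≤ t) : (1 - t) / (1 + t) ^ 2 ≤ 1 := by
  rw [div_le_one (by positivity)]
  nlinarith

lemma one_sub_three_mul_le_div_one_add_sq {t : K} (ht : 0 ≤ t) :
    1 - 3 * t ≤ (1 - t) / (1 + t) ^ 2 := by
  rw [le_div_iff₀ (by positivity)]
  nlinarith [pow_nonneg ht 2, pow_nonneg ht 3]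

variable {ε : K} {n : ℕ} {c : ℕ → K}

lemma one_le_one_add_of_mul_pow_le (hn : ε * n ^ 4 ≤ 1) (hε : 0 ≤ ε) {k : ℕ} (hk : k < n) :
    1 ≤ 1 + 2 * (k : K) * (1 - ε * (k + 1) ^ 4) := by
  have hkn : (k : K) + 1 ≤ n := by exact_mod_cast hk
  have h : ε * ((k : K) + 1) ^ 4 ≤ 1 := le_trans (by gcongr) hn
  have : 0 ≤ 2 * (k : K) * (1 - ε * (k + 1) ^ 4) := mul_nonneg (by positivity) (by linarith)
  linarith

-- For `ε = 0` the solution is `c k = k ^ 2`; the factor `1 - ε * (k + 1) ^ 4` absorbs the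
-- accumulated perturbation of the differences `c (k + 1) - c k`.
lemma bounds_of_recurrence (hε : 0 ≤ ε) (hn : ε * n ^ 4 ≤ 1) (h0 : c 0 = 0) (h1 : c 1 = 1)
    (hc : ∀ k, c (k + 2) + c k =
      2 * (c (k + 1) + 1) * ((1 - ε * c (k + 1)) / (1 + ε * c (k + 1)) ^ 2)) {k : ℕ} (hk : k < n) :
    0 ≤ c k ∧ c k ≤ k ^ 2 ∧
      1 + 2 * k * (1 - ε * (k + 1) ^ 4) ≤ c (k + 1) - c k ∧ c (k + 1) - c k ≤ 2 * k + 1 := by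
  induction k with
  | zero => simp [h0, h1]
  | succ k ih =>
    obtain ⟨hpos, hsq, hlower, hupper⟩ := ih (by lia)
    have hgap := one_le_one_add_of_mul_pow_le hn hε (k := k) (by lia)
    have hm0 : 0 ≤ c (k + 1) := by linarith
    have hm : c (k + 1) ≤ ((k : K) + 1) ^ 2 := by linarith
    have ht : 0 ≤ ε * c (k + 1) := by positivity
    have hstep_le : c (k + 2) + c k ≤ 2 * (c (k + 1) + 1) := by
      rw [hc]
      exact mul_le_of_le_one_right (by positivity) (one_sub_div_one_add_sq_le_one ht)
    have hle_step : 2 * (c (k + 1) + 1) * (1 - 3 * (ε * c (k + 1))) ≤ c (k + 2) + c k := by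
      rw [hc]
      gcongr
      exact one_sub_three_mul_le_div_one_add_sq ht
    have herror : ε * (c (k + 1) * (c (k + 1) + 1)) ≤
        ε * (((k : K) + 1) ^ 2 * (((k : K) + 1) ^ 2 + 1)) := by gcongr
    have hpoly : 0 ≤ ε * (4 * ((k : K) + 1) ^ 4 + 12 * (k + 1) ^ 3 + 2 * (k + 1) ^ 2
        + 2 * (k + 1)) := by positivity
    push_cast
    refine ⟨hm0, hm, ?_, ?_⟩
    · linear_combination hlower + hle_step + 6 * herror + hpoly
    · linarith

lemma natCast_le_of_recurrence (hε : 0 ≤ ε) (hn : ε * n ^ 4 ≤ 1) (h0 : c 0 = 0) (h1 : c 1 = 1)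
    (hc : ∀ k, c (k + 2) + c k =
      2 * (c (k + 1) + 1) * ((1 - ε * c (k + 1)) / (1 + ε * c (k + 1)) ^ 2)) {k : ℕ} (hk : k ≤ n) :
    (k : K) ≤ c k := by
  induction k with
  | zero => simp [h0]
  | succ k ih =>
    obtain ⟨-, -, hlower, -⟩ := bounds_of_recurrence hε hn h0 h1 hc hk
    have hgap := one_le_one_add_of_mul_pow_le hn hε hk
    have := ih (by lia)
    push_cast
    linarith

end Recurrence

section Cancellation

/-- `γ ^ 2` is a common factor of the three binary forms at `(X, Z)` which, for a point `P` of
`y² = x³ - N²x` with `x(P) = a` and a point `Q` with `x(Q) = X / Z` in lowest terms, represent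
`(1 : x(Q + P) + x(Q - P) : x(Q + P) * x(Q - P))`. The first and the last form are the squares of
`X - a * Z` and `a * X + N ^ 2 * Z`. -/
structure IsCommonFactor (a N X Z γ : ℤ) : Prop where
  isCoprime : IsCoprime X Z
  dvd_sub_mul : γ ∣ X - a * Z
  dvd_mul_add : γ ∣ a * X + N ^ 2 * Z
  sq_dvd : γ ^ 2 ∣ 2 * (a * X - N ^ 2 * Z) * (X + a * Z)

lemma not_four_dvd_sq_add_sq {a N : ℤ} (hN : Odd N) : ¬ 4 ∣ a ^ 2 + N ^ 2 := by
  have hN := Int.sq_mod_four_eq_one_of_odd hN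
  rcases Int.even_or_odd' a with ⟨c, rfl | rfl⟩ <;> ring_nf <;> lia

lemma not_sixteen_dvd_sq_add_sq {a N : ℤ} (hN : Squarefree N) (hN2 : 2 ∣ N) :
    ¬ 16 ∣ a ^ 2 + N ^ 2 := by
  intro h
  have ha : 2 ∣ a := by
    refine Int.prime_two.dvd_of_dvd_pow (n := 2) ?_
    exact (dvd_add_left (dvd_pow hN2 two_ne_zero)).1 (dvd_trans (by norm_num) h)
  obtain ⟨a, rfl⟩ := ha
  obtain ⟨N, rfl⟩ := hN2
  have hN1 : Odd N := by
    rw [← Int.not_even_iff_odd, even_iff_two_dvd]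
    exact fun h2 ↦ Int.prime_two.not_isUnit (hN 2 (mul_dvd_mul_left 2 h2))
  refine not_four_dvd_sq_add_sq (a := a) hN1 ?_
  ring_nf at h
  lia

namespace IsCommonFactor

variable {a N X Z γ p : ℤ}

lemma isCoprime_right (h : IsCommonFactor a N X Z γ) : IsCoprime γ Z := by
  have hZ : IsCoprime (X - a * Z) Z := by
    simpa [sub_eq_add_neg] using h.isCoprime.add_mul_right_left (-a)
  exact hZ.of_isCoprime_of_dvd_left h.dvd_sub_mul

lemma dvd_sq_add_sq (h : IsCommonFactor a N X Z γ) : γ ∣ a ^ 2 + N ^ 2 := by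
  refine h.isCoprime_right.dvd_of_dvd_mul_right ?_
  convert dvd_sub h.dvd_mul_add (h.dvd_sub_mul.mul_left a) using 1
  ring

lemma sq_dvd_four_mul (h : IsCommonFactor a N X Z γ) :
    γ ^ 2 ∣ 4 * (a * (a ^ 2 + N ^ 2) * Z - 2 * N ^ 2 * X) := by
  have hsub : γ ^ 2 ∣ (X - a * Z) ^ 2 := pow_dvd_pow_of_dvd h.dvd_sub_mul 2
  have hmul : γ ^ 2 ∣ (X - a * Z) * (a * X + N ^ 2 * Z) := by
    simpa [sq] using mul_dvd_mul h.dvd_sub_mul h.dvd_mul_add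
  refine h.isCoprime_right.pow_left.dvd_of_dvd_mul_right ?_
  convert dvd_sub (dvd_add h.sq_dvd (hsub.mul_left (4 * a))) (hmul.mul_left 6) using 1
  ring

lemma dvd_and_dvd_of_prime_dvd (h : IsCommonFactor a N X Z γ) (hp : Prime p) (hpγ : p ∣ γ)
    (hpN : p ∣ N) : p ∣ a ∧ p ∣ X := by
  have ha : p ∣ a := hp.dvd_of_dvd_pow <|
    (dvd_add_left (dvd_pow hpN two_ne_zero)).1 (hpγ.trans h.dvd_sq_add_sq)
  exact ⟨ha, (dvd_sub_left (ha.mul_right Z)).1 (hpγ.trans h.dvd_sub_mul)⟩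

lemma prime_dvd (h : IsCommonFactor a N X Z γ) (hp : Prime p) (hp2 : ¬ p ∣ 2) (hpγ : p ∣ γ) :
    p ∣ N := by
  have hps : p ∣ a ^ 2 + N ^ 2 := hpγ.trans h.dvd_sq_add_sq
  have hp8 : p ∣ 2 ^ 3 * (N ^ 2 * X) := by
    have hsq : p ∣ 4 * (a * (a ^ 2 + N ^ 2) * Z - 2 * N ^ 2 * X) :=
      hpγ.trans ((dvd_pow_self γ two_ne_zero).trans h.sq_dvd_four_mul)
    calc p ∣ 4 * a * Z * (a ^ 2 + N ^ 2) - 4 * (a * (a ^ 2 + N ^ 2) * Z - 2 * N ^ 2 * X) :=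
          dvd_sub (hps.mul_left _) hsq
      _ = 2 ^ 3 * (N ^ 2 * X) := by ring
  rcases hp.dvd_or_dvd hp8 with h2 | hNX
  · exact absurd (hp.dvd_of_dvd_pow h2) hp2
  rcases hp.dvd_or_dvd hNX with hN | hX
  · exact hp.dvd_of_dvd_pow hN
  have haZ : p ∣ a * Z := (dvd_sub_right hX).1 (hpγ.trans h.dvd_sub_mul)
  have hpZ : ¬ p ∣ Z := fun hZ ↦ hp.not_isUnit (h.isCoprime.isUnit_of_dvd' hX hZ)
  have ha : p ∣ a := (hp.dvd_or_dvd haZ).resolve_right hpZ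
  exact hp.dvd_of_dvd_pow ((dvd_add_right (dvd_pow ha two_ne_zero)).1 hps)

lemma not_prime_pow_three_dvd (h : IsCommonFactor a N X Z γ) (hN : Squarefree N) (hp : Prime p)
    (hp2 : ¬ p ∣ 2) : ¬ p ^ 3 ∣ γ := by
  intro hpγ
  have hpγ' : p ∣ γ := (dvd_pow_self p three_ne_zero).trans hpγ
  have hpN : p ∣ N := h.prime_dvd hp hp2 hpγ'
  obtain ⟨hpa, hpX⟩ := h.dvd_and_dvd_of_prime_dvd hp hpγ' hpN
  have hps : p ^ 3 ∣ a ^ 2 + N ^ 2 := hpγ.trans h.dvd_sq_add_sq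
  obtain ⟨M, rfl⟩ := hpN
  have hpM : ¬ p ∣ M := fun hM ↦ hp.not_isUnit (hN p (mul_dvd_mul_left p hM))
  have hpZ : ¬ p ∣ Z := fun hZ ↦ hp.not_isUnit (h.isCoprime.isUnit_of_dvd' hpX hZ)
  have hX : p ^ 2 ∣ X := by
    have hsq : p ^ 4 ∣ 4 * (a * (a ^ 2 + (p * M) ^ 2) * Z - 2 * (p * M) ^ 2 * X) :=
      (pow_dvd_pow p (by norm_num)).trans <|
        (pow_mul p 3 2 ▸ pow_dvd_pow_of_dvd hpγ 2).trans h.sq_dvd_four_mul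
    have has : p ^ 4 ∣ a * (a ^ 2 + (p * M) ^ 2) := pow_succ' p 3 ▸ mul_dvd_mul hpa hps
    have hpX' : p ^ 2 * p ^ 2 ∣ p ^ 2 * (2 ^ 3 * M ^ 2 * X) := by
      calc p ^ 2 * p ^ 2 = p ^ 4 := by ring
        _ ∣ 4 * Z * (a * (a ^ 2 + (p * M) ^ 2)) -
            4 * (a * (a ^ 2 + (p * M) ^ 2) * Z - 2 * (p * M) ^ 2 * X) :=
          dvd_sub (has.mul_left _) hsq
        _ = p ^ 2 * (2 ^ 3 * M ^ 2 * X) := by ring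
    have hp8M : ¬ p ∣ 2 ^ 3 * M ^ 2 := fun hd ↦ (hp.dvd_or_dvd hd).elim
      (fun h2 ↦ hp2 (hp.dvd_of_dvd_pow h2)) (fun hM ↦ hpM (hp.dvd_of_dvd_pow hM))
    exact hp.pow_dvd_of_dvd_mul_left 2 hp8M
      ((mul_dvd_mul_iff_left (pow_ne_zero 2 hp.ne_zero)).1 hpX')
  have ha : p ^ 2 ∣ a := by
    refine hp.pow_dvd_of_dvd_mul_right 2 hpZ ((dvd_sub_right hX).1 ?_)
    exact ((pow_dvd_pow p (by norm_num)).trans hpγ).trans h.dvd_sub_mul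
  have ha2 : p ^ 3 ∣ a ^ 2 :=
    (pow_dvd_pow p (by norm_num)).trans (pow_mul p 2 2 ▸ pow_dvd_pow_of_dvd ha 2)
  have hpM2 : p ^ 2 * p ∣ p ^ 2 * M ^ 2 := by
    simpa only [← pow_succ, ← mul_pow] using (dvd_add_right ha2).1 hps
  exact hpM (hp.dvd_of_dvd_pow ((mul_dvd_mul_iff_left (pow_ne_zero 2 hp.ne_zero)).1 hpM2))

lemma two_pow_dvd (h : IsCommonFactor a N X Z γ) (hN : Squarefree N) {k : ℕ} (hk : 2 ^ k ∣ γ) :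
    2 ^ k ∣ 2 * N ^ 2 := by
  have hks : 2 ^ k ∣ a ^ 2 + N ^ 2 := hk.trans h.dvd_sq_add_sq
  rcases Int.even_or_odd N with hN2 | hN2
  · have hk3 : k ≤ 3 := by
      by_contra! hlt
      exact not_sixteen_dvd_sq_add_sq hN hN2.two_dvd ((pow_dvd_pow 2 hlt).trans hks)
    calc (2 : ℤ) ^ k ∣ 2 * 2 ^ 2 := pow_dvd_pow 2 hk3
      _ ∣ 2 * N ^ 2 := mul_dvd_mul_left 2 (pow_dvd_pow_of_dvd hN2.two_dvd 2)
  · have hk1 : k ≤ 1 := by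
      by_contra! hlt
      exact not_four_dvd_sq_add_sq hN2 ((pow_dvd_pow 2 hlt).trans hks)
    exact (pow_dvd_pow 2 hk1).trans (by simp)

lemma dvd_two_mul_sq (h : IsCommonFactor a N X Z γ) (hN : Squarefree N) : γ ∣ 2 * N ^ 2 := by
  rw [← Int.natAbs_dvd_natAbs, Nat.dvd_iff_prime_pow_dvd_dvd]
  intro p k hp hk
  rw [← Int.natCast_dvd] at hk ⊢
  push_cast at hk ⊢
  have hpZ : Prime (p : ℤ) := Nat.prime_iff_prime_int.1 hp
  obtain rfl | hp2 := eq_or_ne p 2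
  · exact h.two_pow_dvd hN hk
  have hp2 : ¬ (p : ℤ) ∣ 2 := by
    exact_mod_cast fun hd ↦ hp2 ((Nat.prime_dvd_prime_iff_eq hp Nat.prime_two).1 hd)
  obtain rfl | hk0 := eq_or_ne k 0
  · simp
  have hk2 : k ≤ 2 := by
    by_contra! hlt
    exact h.not_prime_pow_three_dvd hN hpZ hp2 ((pow_dvd_pow _ hlt).trans hk)
  have hpN : (p : ℤ) ∣ N := h.prime_dvd hpZ hp2 ((dvd_pow_self _ hk0).trans hk)
  exact ((pow_dvd_pow _ hk2).trans (pow_dvd_pow_of_dvd hpN 2)).mul_left 2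

lemma isCoprime_of_isSquare (h : IsCommonFactor a N X Z γ) (hN : Squarefree N) (hX : IsSquare X)
    (hXN : IsSquare (X - N * Z)) : IsCoprime γ N := by
  refine isCoprime_of_prime_dvd (fun h0 ↦ hN.ne_zero h0.2) fun p hp hpγ hpN ↦ ?_
  have hpX : p ∣ X := (h.dvd_and_dvd_of_prime_dvd hp hpγ hpN).2
  have hpZ : ¬ p ∣ Z := fun hZ ↦ hp.not_isUnit (h.isCoprime.isUnit_of_dvd' hpX hZ)
  have sq_dvd_of_isSquare {m : ℤ} (hm : IsSquare m) (hpm : p ∣ m) : p ^ 2 ∣ m := by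
    obtain ⟨r, rfl⟩ := hm.exists_sq
    exact pow_dvd_pow_of_dvd (hp.dvd_of_dvd_pow hpm) 2
  have hXN' := sq_dvd_of_isSquare hXN (dvd_sub hpX (hpN.mul_right Z))
  have hN' : p ^ 2 ∣ N := hp.pow_dvd_of_dvd_mul_right 2 hpZ
    ((dvd_sub_right (sq_dvd_of_isSquare hX hpX)).1 hXN')
  exact hp.not_isUnit (hN p (sq p ▸ hN'))

lemma dvd_two (h : IsCommonFactor a N X Z γ) (hN : Squarefree N) (hX : IsSquare X)
    (hXN : IsSquare (X - N * Z)) : γ ∣ 2 :=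
  (h.isCoprime_of_isSquare hN hX hXN).pow_right.dvd_of_dvd_mul_right (h.dvd_two_mul_sq hN)

end IsCommonFactor

end Cancellation

section Denominators

lemma exists_symm_mul_eq_one_of_isCoprime {R : Type*} [CommRing R] {x₁ z₁ x₂ z₂ : R}
    (h₁ : IsCoprime x₁ z₁) (h₂ : IsCoprime x₂ z₂) :
    ∃ u v w, u * (z₁ * z₂) + v * (x₁ * z₂ + x₂ * z₁) + w * (x₁ * x₂) = 1 := by
  obtain ⟨p, q, h₁⟩ := h₁
  obtain ⟨r, s, h₂⟩ := h₂
  -- Expanding `(p * x₁ + q * z₁) * (r * x₂ + s * z₂) = 1` gives `A + c * m = 1` with `m = x₁ * z₂`,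
  -- `c = p * s - q * r` and `A` of the required shape. So `A * (1 + c * m) + c ^ 2 * m ^ 2 = 1`,
  -- where `m ^ 2 = m * (x₁ * z₂ + x₂ * z₁) - x₁ * x₂ * (z₁ * z₂)` also has the required shape.
  refine ⟨q * s * (1 + (p * s - q * r) * (x₁ * z₂)),
    q * r * (1 + (p * s - q * r) * (x₁ * z₂)) + (p * s - q * r) ^ 2 * (x₁ * z₂),
    p * r * (1 + (p * s - q * r) * (x₁ * z₂)) - (p * s - q * r) ^ 2 * (z₁ * z₂), ?_⟩
  linear_combination (1 + (p * s - q * r) * (x₁ * z₂)) * ((r * x₂ + s * z₂) * h₁ + h₂)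

lemma exists_eq_mul_of_proportional {R : Type*} [CommRing R] {s₀ s₁ s₂ t₀ t₁ t₂ : R}
    (ht : ∃ u v w, u * t₀ + v * t₁ + w * t₂ = 1) (h₁ : s₀ * t₁ = s₁ * t₀)
    (h₂ : s₀ * t₂ = s₂ * t₀) (h₁₂ : s₁ * t₂ = s₂ * t₁) :
    ∃ g, s₀ = g * t₀ ∧ s₁ = g * t₁ ∧ s₂ = g * t₂ := by
  obtain ⟨u, v, w, ht⟩ := ht
  refine ⟨u * s₀ + v * s₁ + w * s₂, ?_, ?_, ?_⟩
  · linear_combination -s₀ * ht + v * h₁ + w * h₂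
  · linear_combination -s₁ * ht - u * h₁ + w * h₁₂
  · linear_combination -s₂ * ht - u * h₂ - v * h₁₂

lemma exists_isCommonFactor {a N e f : ℤ} {x p m : ℚ} (hp : (p.den : ℤ) = e ^ 2)
    (hm : (m.den : ℤ) = f ^ 2) (hmul : (x - a) ^ 2 * (p * m) = (a * x + N ^ 2) ^ 2)
    (hadd : (x - a) ^ 2 * (p + m) = 2 * (a * x - N ^ 2) * (x + a)) :
    ∃ γ, IsCommonFactor a N x.num x.den γ ∧ x.num - a * x.den = γ * (e * f) := by
  have hx := x.mul_den_eq_num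
  have hpm : p * m * (p.den * m.den) = p.num * m.num := by
    linear_combination p * p.den * m.mul_den_eq_num + m.num * p.mul_den_eq_num
  have hpm' : (p + m) * (p.den * m.den) = p.num * m.den + m.num * p.den := by
    linear_combination m.den * p.mul_den_eq_num + p.den * m.mul_den_eq_num
  obtain ⟨g, hg₀, hg₁, hg₂⟩ := exists_eq_mul_of_proportional
    (s₀ := (x.num - a * x.den) ^ 2)
    (s₁ := 2 * (a * x.num - N ^ 2 * x.den) * (x.num + a * x.den))
    (s₂ := (a * x.num + N ^ 2 * x.den) ^ 2)
    (exists_symm_mul_eq_one_of_isCoprime p.isCoprime_num_den m.isCoprime_num_den)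
    (by
      qify
      rw [← hx, ← hpm']
      linear_combination (x.den ^ 2 * (p.den * m.den) : ℚ) * hadd)
    (by
      qify
      rw [← hx, ← hpm]
      linear_combination (x.den ^ 2 * (p.den * m.den) : ℚ) * hmul)
    (by
      qify
      rw [← hx, ← hpm, ← hpm']
      linear_combination
        (x.den ^ 2 * (p.den * m.den) : ℚ) * ((p + m) * hmul - p * m * hadd))
  have hef : e * f ≠ 0 := by
    rw [← pow_ne_zero_iff two_ne_zero, mul_pow, ← hp, ← hm]
    simp
  rw [hp, hm, ← mul_pow] at hg₀
  obtain ⟨γ, hγ⟩ := (Int.pow_dvd_pow_iff two_ne_zero).1 (Dvd.intro_left g hg₀.symm)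
  obtain rfl : g = γ ^ 2 := by
    refine mul_right_cancel₀ (pow_ne_zero 2 hef) ?_
    rw [← hg₀, hγ]
    ring
  exact ⟨γ, ⟨x.isCoprime_num_den, ⟨e * f, by rw [hγ, mul_comm]⟩,
    (Int.pow_dvd_pow_iff two_ne_zero).1 ⟨_, hg₂⟩, ⟨_, hg₁⟩⟩, by rw [hγ, mul_comm]⟩

lemma exists_den_eq_sq {A B : ℤ} {x y : ℚ} (h : y ^ 2 = x ^ 3 + A * x + B) :
    ∃ e : ℤ, 0 < e ∧ (x.den : ℤ) = e ^ 2 := by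
  have hsq : IsSquare ((x.den : ℤ) * (x.num ^ 3 + x.den * (x.den * (A * x.num + B * x.den)))) := by
    rw [← Rat.isSquare_intCast_iff]
    refine ⟨x.den ^ 2 * y, ?_⟩
    push_cast
    rw [← x.mul_den_eq_num]
    linear_combination -(x.den ^ 4 : ℚ) * h
  obtain ⟨c, hc⟩ := hsq.exists_sq
  obtain ⟨e, he | he⟩ := Int.sq_of_isCoprime
    (x.isCoprime_num_den.symm.pow_right.add_mul_left_right _) hc
  · have hpos : 0 < e ^ 2 := by rw [← he]; exact_mod_cast x.den_pos
    exact ⟨|e|, abs_pos.2 (by rintro rfl; simp at hpos), by rw [sq_abs, he]⟩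
  · have := x.den_pos
    nlinarith [sq_nonneg e]

lemma isSquare_num_sub_mul_den {N : ℤ} {x : ℚ} (hx : IsSquare x) (hxN : IsSquare (x - N)) :
    IsSquare (x.num - N * x.den) := by
  have hden : IsSquare (x.den : ℚ) := (Rat.isSquare_iff.1 hx).2.map (Nat.castRingHom ℚ)
  rw [← Rat.isSquare_intCast_iff]
  have hnum : ((x.num - N * x.den : ℤ) : ℚ) = (x - N) * x.den := by
    push_cast
    rw [sub_mul, x.mul_den_eq_num]
  exact hnum ▸ hxN.mul hden

lemma le_two_mul_mul_of_abs_le {s t γ B d : ℤ} (hγ : |γ| ≤ B) (hd : 0 ≤ d) (h : s - t = γ * d)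
    (hst : 2 * s ≤ t) : t ≤ 2 * B * d := by
  have hle : -γ * d ≤ B * d := by gcongr; exact (neg_le_abs γ).trans hγ
  linarith

lemma mul_le_and_le_of_mul_sq_le {a N : ℤ} {e : ℕ → ℤ} {n : ℕ} (hN : 0 < N) (ha : 4 * N < a)
    (he : ∀ k, 0 < e k) (he₁ : e 1 = 1)
    (h : ∀ k, 1 ≤ k → k + 1 < n → a * e (k + 1) ^ 2 ≤ 4 * N ^ 2 * (e (k + 2) * e k))
    (heven : ∀ k, 1 ≤ k → k + 1 < n → Even (k + 1) →
      a * e (k + 1) ^ 2 ≤ 4 * (e (k + 2) * e k)) {k : ℕ} (hk : 1 ≤ k) (hkn : k < n) :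
    (Even k → a * e k ≤ 4 * e (k + 1)) ∧ e k ≤ e (k + 1) := by
  induction k, hk using Nat.le_induction with
  | base => exact ⟨fun h1 ↦ absurd h1 (by decide), he₁ ▸ he 2⟩
  | succ k hk ih =>
    obtain ⟨ih_even, ih_le⟩ := ih (by lia)
    have h0 := he k
    have h1 := he (k + 1)
    have h2 := he (k + 2)
    rcases Nat.even_or_odd (k + 1) with hpar | hpar
    · have hle : a * e (k + 1) ≤ 4 * e (k + 2) := by
        refine le_of_mul_le_mul_right ?_ h1
        calc a * e (k + 1) * e (k + 1) = a * e (k + 1) ^ 2 := by ring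
          _ ≤ 4 * (e (k + 2) * e k) := heven k hk hkn hpar
          _ ≤ 4 * (e (k + 2) * e (k + 1)) := by gcongr
          _ = 4 * e (k + 2) * e (k + 1) := by ring
      exact ⟨fun _ ↦ hle, by nlinarith⟩
    · have hk_even : Even k := by grind
      refine ⟨fun h ↦ absurd h (Nat.not_even_iff_odd.2 hpar), ?_⟩
      have hle : (4 * N) ^ 2 * e (k + 1) ≤ (4 * N) ^ 2 * e (k + 2) := by
        refine le_of_mul_le_mul_right ?_ h1
        calc (4 * N) ^ 2 * e (k + 1) * e (k + 1) ≤ a ^ 2 * e (k + 1) * e (k + 1) := by gcongr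
          _ = a * (a * e (k + 1) ^ 2) := by ring
          _ ≤ a * (4 * N ^ 2 * (e (k + 2) * e k)) :=
            mul_le_mul_of_nonneg_left (h k hk hkn) (by lia)
          _ = 4 * N ^ 2 * e (k + 2) * (a * e k) := by ring
          _ ≤ 4 * N ^ 2 * e (k + 2) * (4 * e (k + 1)) :=
            mul_le_mul_of_nonneg_left (ih_even hk_even) (by positivity)
          _ = (4 * N) ^ 2 * e (k + 2) * e (k + 1) := by ring
      exact le_of_mul_le_mul_left hle (by positivity)

lemma one_lt_of_mul_sq_le {a N : ℤ} {e : ℕ → ℤ} {n : ℕ} (hN : 0 < N) (ha : 4 * N < a)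
    (he : ∀ k, 0 < e k) (he₁ : e 1 = 1) (hn : 3 ≤ n)
    (h : ∀ k, 1 ≤ k → k + 1 < n → a * e (k + 1) ^ 2 ≤ 4 * N ^ 2 * (e (k + 2) * e k))
    (heven : ∀ k, 1 ≤ k → k + 1 < n → Even (k + 1) →
      a * e (k + 1) ^ 2 ≤ 4 * (e (k + 2) * e k)) : 1 < e n := by
  have hgrowth {k : ℕ} (hk : 1 ≤ k) (hkn : k < n) :=
    mul_le_and_le_of_mul_sq_le hN ha he he₁ h heven hk hkn
  have h3 : 1 < e 3 := by
    have h2 := (hgrowth (k := 2) (by lia) (by lia)).1 even_two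
    nlinarith [he 2]
  have hmono {k : ℕ} (hk : 3 ≤ k) (hkn : k ≤ n) : e 3 ≤ e k := by
    induction k, hk using Nat.le_induction with
    | base => exact le_rfl
    | succ k hk ih => exact (ih (by lia)).trans (hgrowth (by lia) hkn).2
  exact h3.trans_le (hmono hn le_rfl)

end Denominators

lemma nsmul_ne_zero_of_not_isOfFinAddOrder {A : Type*} [AddMonoid A] {x : A}
    (hx : ¬ IsOfFinAddOrder x) {k : ℕ} (hk : 0 < k) : k • x ≠ 0 :=
  fun h ↦ hx (isOfFinAddOrder_iff_nsmul_eq_zero.2 ⟨k, hk, h⟩)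

lemma nsmul_add_nsmul_ne_zero_of_not_isOfFinAddOrder {A : Type*} [AddMonoid A] {x : A}
    (hx : ¬ IsOfFinAddOrder x) {k : ℕ} (hk : 0 < k) : k • x + k • x ≠ 0 := by
  rw [← add_nsmul]
  exact nsmul_ne_zero_of_not_isOfFinAddOrder hx (by lia)

namespace congruentCurve

open WeierstrassCurve.Affine
open WeierstrassCurve.Affine.Point hiding some

/-- The `x`-coordinate of a point of `E_N`. The point at infinity gets the value `0`, so that
`a / xCoord (k • P)` vanishes at `k = 0`, as it should. -/
def xCoord {N : ℕ} : (congruentCurve N).Point → ℚ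
  | 0 => 0
  | .some x _ _ => x

variable {N : ℕ} {P Q : (congruentCurve N).Point}

lemma sq_eq_of_nonsingular {x y : ℚ} (h : (congruentCurve N).Nonsingular x y) :
    y ^ 2 = x ^ 3 - N ^ 2 * x := by
  have := (equation_iff _ _).1 h.1
  simp only [congruentCurve] at this
  linear_combination this

lemma negY_eq_neg (x y : ℚ) : (congruentCurve N).negY x y = -y := by
  simp [negY, congruentCurve]

@[simp]
lemma xCoord_some {x y : ℚ} (h : (congruentCurve N).Nonsingular x y) :
    xCoord (Point.some x y h) = x := rfl

lemma xCoord_some_add_some {x₁ y₁ x₂ y₂ : ℚ} {h₁ : (congruentCurve N).Nonsingular x₁ y₁}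
    {h₂ : (congruentCurve N).Nonsingular x₂ y₂} (hx : x₁ ≠ x₂) :
    xCoord (Point.some x₁ y₁ h₁ + Point.some x₂ y₂ h₂) = ((y₁ - y₂) / (x₁ - x₂)) ^ 2 - x₁ - x₂ := by
  rw [add_of_X_ne hx, xCoord_some, slope_of_X_ne hx]
  simp [addX, congruentCurve]

lemma xCoord_some_sub_some {x₁ y₁ x₂ y₂ : ℚ} {h₁ : (congruentCurve N).Nonsingular x₁ y₁}
    {h₂ : (congruentCurve N).Nonsingular x₂ y₂} (hx : x₁ ≠ x₂) :
    xCoord (Point.some x₁ y₁ h₁ - Point.some x₂ y₂ h₂) = ((y₁ + y₂) / (x₁ - x₂)) ^ 2 - x₁ - x₂ := by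
  rw [sub_eq_add_neg, neg_some, xCoord_some_add_some hx, negY_eq_neg, sub_neg_eq_add]

lemma sq_mul_xCoord_add_mul_xCoord_sub (hP : P ≠ 0) (hQ : Q ≠ 0) (hx : xCoord Q ≠ xCoord P) :
    (xCoord Q - xCoord P) ^ 2 * (xCoord (Q + P) * xCoord (Q - P)) =
      (xCoord P * xCoord Q + N ^ 2) ^ 2 := by
  match P, Q with
  | 0, _ => exact absurd rfl hP
  | _, 0 => exact absurd rfl hQ
  | .some x₁ y₁ h₁, .some x₂ y₂ h₂ =>
    simp only [xCoord_some] at hx ⊢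
    have e₁ := sq_eq_of_nonsingular h₁
    have e₂ := sq_eq_of_nonsingular h₂
    have hx' := sub_ne_zero.2 hx
    rw [xCoord_some_add_some hx, xCoord_some_sub_some hx]
    field_simp
    linear_combination (y₂ ^ 2 - y₁ ^ 2 + (x₂ ^ 3 - N ^ 2 * x₂) - (x₁ ^ 3 - N ^ 2 * x₁)) * (e₂ - e₁)
      - 2 * (x₁ + x₂) * (x₂ - x₁) ^ 2 * (e₁ + e₂)

lemma sq_mul_xCoord_add_add_xCoord_sub (hP : P ≠ 0) (hQ : Q ≠ 0) (hx : xCoord Q ≠ xCoord P) :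
    (xCoord Q - xCoord P) ^ 2 * (xCoord (Q + P) + xCoord (Q - P)) =
      2 * (xCoord P * xCoord Q - N ^ 2) * (xCoord Q + xCoord P) := by
  match P, Q with
  | 0, _ => exact absurd rfl hP
  | _, 0 => exact absurd rfl hQ
  | .some x₁ y₁ h₁, .some x₂ y₂ h₂ =>
    simp only [xCoord_some] at hx ⊢
    have e₁ := sq_eq_of_nonsingular h₁
    have e₂ := sq_eq_of_nonsingular h₂
    have hx' := sub_ne_zero.2 hx
    rw [xCoord_some_add_some hx, xCoord_some_sub_some hx]
    field_simp
    linear_combination 2 * e₁ + 2 * e₂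

lemma eq_or_eq_neg_of_xCoord_eq (hP : P ≠ 0) (hQ : Q ≠ 0) (hx : xCoord P = xCoord Q) :
    P = Q ∨ P = -Q := by
  match P, Q with
  | 0, _ => exact absurd rfl hP
  | _, 0 => exact absurd rfl hQ
  | .some x₁ y₁ h₁, .some x₂ y₂ h₂ => exact X_eq_iff.1 hx

lemma exists_xCoord_add_self (hQ : Q + Q ≠ 0) :
    ∃ y, y ≠ 0 ∧ y ^ 2 = xCoord Q ^ 3 - N ^ 2 * xCoord Q ∧
      xCoord (Q + Q) = ((xCoord Q ^ 2 + N ^ 2) / (2 * y)) ^ 2 := by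
  match Q with
  | 0 => exact absurd (add_zero 0) hQ
  | .some x y h =>
    have hy : y ≠ (congruentCurve N).negY x y := fun hy ↦ hQ (add_self_of_Y_eq hy)
    have hy0 : y ≠ 0 := by
      rintro rfl
      exact hy (by rw [negY_eq_neg, _root_.neg_zero])
    have hxy := sq_eq_of_nonsingular h
    refine ⟨y, hy0, hxy, ?_⟩
    rw [add_self_of_Y_ne hy, xCoord_some, xCoord_some, slope_of_Y_ne rfl hy, negY_eq_neg,
      sub_neg_eq_add, ← two_mul]
    simp only [addX, congruentCurve]
    field_simp
    linear_combination -8 * x * hxy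

lemma neg_le_xCoord (P : (congruentCurve N).Point) : -(N : ℚ) ≤ xCoord P := by
  match P with
  | 0 => simp [xCoord]
  | .some x y h =>
    rw [xCoord_some]
    by_contra! hlt
    have := N.cast_nonneg (α := ℚ)
    have hneg : 0 < (-N - x) * ((N - x) * -x) :=
      mul_pos (by linarith) (mul_pos (by linarith) (by linarith))
    linarith [sq_nonneg y, sq_eq_of_nonsingular h]

lemma den_xCoord_of_isIntegralPoint (hP : IsIntegralPoint P) : (xCoord P).den = 1 := by
  obtain ⟨x, y, h, rfl, hx⟩ := hP
  exact hx

lemma exists_den_xCoord_eq_sq (P : (congruentCurve N).Point) :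
    ∃ e : ℤ, 0 < e ∧ ((xCoord P).den : ℤ) = e ^ 2 := by
  match P with
  | 0 => exact ⟨1, by simp [xCoord]⟩
  | .some x y h =>
    refine exists_den_eq_sq (y := y) (A := -N ^ 2) (B := 0) ?_
    rw [xCoord_some]
    push_cast
    linear_combination sq_eq_of_nonsingular h

lemma xCoord_ne_zero (hQ : Q + Q ≠ 0) : xCoord Q ≠ 0 := by
  intro hx
  obtain ⟨y, hy, hxy, -⟩ := exists_xCoord_add_self hQ
  exact hy (pow_eq_zero_iff two_ne_zero |>.1 (by rw [hxy, hx]; ring))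

lemma isSquare_xCoord_add_self (hQ : Q + Q ≠ 0) : IsSquare (xCoord (Q + Q)) := by
  obtain ⟨y, -, -, hx⟩ := exists_xCoord_add_self hQ
  exact hx ▸ IsSquare.sq _

lemma isSquare_xCoord_add_self_sub (hQ : Q + Q ≠ 0) : IsSquare (xCoord (Q + Q) - N) := by
  obtain ⟨y, hy, hxy, hx⟩ := exists_xCoord_add_self hQ
  refine ⟨(xCoord Q ^ 2 - 2 * N * xCoord Q - N ^ 2) / (2 * y), ?_⟩
  rw [hx]
  field_simp
  linear_combination -4 * N * hxy

section Multiples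

variable (hP : ¬ IsOfFinAddOrder P)

include hP

lemma xCoord_nsmul_ne_zero {k : ℕ} (hk : 0 < k) : xCoord (k • P) ≠ 0 :=
  xCoord_ne_zero (nsmul_add_nsmul_ne_zero_of_not_isOfFinAddOrder hP hk)

lemma xCoord_nsmul_ne_xCoord {k : ℕ} (hk : 2 ≤ k) : xCoord (k • P) ≠ xCoord P := by
  intro hx
  obtain ⟨k, rfl⟩ := Nat.exists_eq_add_of_le hk
  have hP0 : P ≠ 0 := by simpa using nsmul_ne_zero_of_not_isOfFinAddOrder hP one_pos
  have hkP := nsmul_ne_zero_of_not_isOfFinAddOrder hP (k := 2 + k) (by lia)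
  rcases eq_or_eq_neg_of_xCoord_eq hkP hP0 hx with h | h
  · refine nsmul_ne_zero_of_not_isOfFinAddOrder hP (k := k + 1) (by lia) ?_
    rw [← sub_eq_zero] at h
    rw [← h]; module
  · refine nsmul_ne_zero_of_not_isOfFinAddOrder hP (k := k + 3) (by lia) ?_
    rw [← sub_eq_zero] at h
    rw [← h]; module

lemma sq_mul_xCoord_nsmul_mul_xCoord_nsmul {k : ℕ} (hk : 1 ≤ k) :
    (xCoord ((k + 1) • P) - xCoord P) ^ 2 * (xCoord ((k + 2) • P) * xCoord (k • P)) =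
      (xCoord P * xCoord ((k + 1) • P) + N ^ 2) ^ 2 := by
  have hP0 : P ≠ 0 := by simpa using nsmul_ne_zero_of_not_isOfFinAddOrder hP one_pos
  have hkP := nsmul_ne_zero_of_not_isOfFinAddOrder hP (k := k + 1) (by lia)
  convert sq_mul_xCoord_add_mul_xCoord_sub hP0 hkP (xCoord_nsmul_ne_xCoord hP (by lia))
    using 5 <;> module

lemma sq_mul_xCoord_nsmul_add_xCoord_nsmul {k : ℕ} (hk : 1 ≤ k) :
    (xCoord ((k + 1) • P) - xCoord P) ^ 2 * (xCoord ((k + 2) • P) + xCoord (k • P)) =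
      2 * (xCoord P * xCoord ((k + 1) • P) - N ^ 2) * (xCoord ((k + 1) • P) + xCoord P) := by
  have hP0 : P ≠ 0 := by simpa using nsmul_ne_zero_of_not_isOfFinAddOrder hP one_pos
  have hkP := nsmul_ne_zero_of_not_isOfFinAddOrder hP (k := k + 1) (by lia)
  convert sq_mul_xCoord_add_add_xCoord_sub hP0 hkP (xCoord_nsmul_ne_xCoord hP (by lia))
    using 5 <;> module

lemma div_xCoord_recurrence (k : ℕ) :
    xCoord P / xCoord ((k + 2) • P) + xCoord P / xCoord (k • P) =
      2 * (xCoord P / xCoord ((k + 1) • P) + 1) *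
        ((1 - (N / xCoord P) ^ 2 * (xCoord P / xCoord ((k + 1) • P))) /
          (1 + (N / xCoord P) ^ 2 * (xCoord P / xCoord ((k + 1) • P))) ^ 2) := by
  have ha : xCoord P ≠ 0 := by simpa using xCoord_nsmul_ne_zero hP one_pos
  have h2 := xCoord_nsmul_ne_zero hP (k := k + 2) (by lia)
  obtain rfl | hk := k.eq_zero_or_pos
  · obtain ⟨y, _, hxy, hx⟩ := exists_xCoord_add_self
      (by simpa using nsmul_add_nsmul_ne_zero_of_not_isOfFinAddOrder hP one_pos : P + P ≠ 0)
    have hne : xCoord P ^ 2 + N ^ 2 ≠ 0 := by positivity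
    simp only [zero_add, two_nsmul, zero_nsmul, one_nsmul, hx]
    rw [show xCoord (0 : (congruentCurve N).Point) = 0 from rfl]
    field_simp
    linear_combination 4 * hxy
  · have h0 := xCoord_nsmul_ne_zero hP hk
    have h1 := xCoord_nsmul_ne_zero hP (k := k + 1) (by lia)
    have hne := sub_ne_zero.2 (xCoord_nsmul_ne_xCoord hP (k := k + 1) (by lia))
    have hmul := sq_mul_xCoord_nsmul_mul_xCoord_nsmul hP hk
    have hadd := sq_mul_xCoord_nsmul_add_xCoord_nsmul hP hk
    have hsum : xCoord P * xCoord ((k + 1) • P) + N ^ 2 ≠ 0 := by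
      rw [← pow_ne_zero_iff two_ne_zero, ← hmul]
      positivity
    calc xCoord P / xCoord ((k + 2) • P) + xCoord P / xCoord (k • P)
      _ = xCoord P *
          ((xCoord ((k + 1) • P) - xCoord P) ^ 2 * (xCoord ((k + 2) • P) + xCoord (k • P))) /
          ((xCoord ((k + 1) • P) - xCoord P) ^ 2 * (xCoord ((k + 2) • P) * xCoord (k • P))) := by
        field_simp
        ring
      _ = _ := by
        rw [hadd, hmul]
        field_simp
        ring

lemma two_mul_xCoord_nsmul_le {n : ℕ} (hn : n ^ 2 * N ≤ xCoord P) {k : ℕ} (hk : 2 ≤ k)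
    (hkn : k ≤ n) : 2 * xCoord (k • P) ≤ xCoord P := by
  have ha : xCoord P ≠ 0 := by simpa using xCoord_nsmul_ne_zero hP one_pos
  have hpos : 0 < xCoord P := lt_of_le_of_ne (le_trans (by positivity) hn) ha.symm
  rcases le_or_gt (xCoord (k • P)) 0 with hx | hx
  · linarith
  have hε : ((N : ℚ) / xCoord P) ^ 2 * n ^ 4 ≤ 1 := by
    have : n ^ 2 * N / xCoord P ≤ 1 := (div_le_one hpos).2 hn
    calc ((N : ℚ) / xCoord P) ^ 2 * n ^ 4 = (n ^ 2 * N / xCoord P) ^ 2 := by ring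
      _ ≤ 1 := pow_le_one₀ (by positivity) this
  have hle : (k : ℚ) ≤ xCoord P / xCoord (k • P) :=
    natCast_le_of_recurrence (c := fun k ↦ xCoord P / xCoord (k • P)) (by positivity) hε
      (by simp [xCoord]) (by simp [ha]) (div_xCoord_recurrence hP) hkn
  rw [le_div_iff₀ hx] at hle
  exact le_trans (by gcongr; exact_mod_cast hk) hle

lemma isSquare_xCoord_nsmul {k : ℕ} (hk : 0 < k) (heven : Even k) :
    IsSquare (xCoord (k • P)) ∧ IsSquare (xCoord (k • P) - N) := by
  obtain ⟨m, rfl⟩ := heven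
  have hm := nsmul_add_nsmul_ne_zero_of_not_isOfFinAddOrder hP (k := m) (by lia)
  rw [add_nsmul]
  exact ⟨isSquare_xCoord_add_self hm, isSquare_xCoord_add_self_sub hm⟩

variable {a : ℤ} (hN : Squarefree N) (ha : xCoord P = a)

include hN ha

lemma mul_sq_le_of_den_xCoord_nsmul {e : ℕ → ℤ} (he : ∀ k, 0 < e k)
    (hden : ∀ k, ((xCoord (k • P)).den : ℤ) = e k ^ 2) {k : ℕ} (hk : 1 ≤ k)
    (hx : 2 * xCoord ((k + 1) • P) ≤ a) :
    a * e (k + 1) ^ 2 ≤ 4 * N ^ 2 * (e (k + 2) * e k) ∧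
      (Even (k + 1) → a * e (k + 1) ^ 2 ≤ 4 * (e (k + 2) * e k)) := by
  obtain ⟨γ, hγ, hsub⟩ := exists_isCommonFactor (a := a) (N := N) (hden (k + 2)) (hden k)
    (by exact_mod_cast ha ▸ sq_mul_xCoord_nsmul_mul_xCoord_nsmul hP hk)
    (by exact_mod_cast ha ▸ sq_mul_xCoord_nsmul_add_xCoord_nsmul hP hk)
  have hd : 0 ≤ e (k + 2) * e k := (mul_pos (he _) (he _)).le
  have hle : 2 * (xCoord ((k + 1) • P)).num ≤ a * (xCoord ((k + 1) • P)).den := by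
    qify
    rw [← Rat.mul_den_eq_num, ← mul_assoc]
    gcongr
  have hNZ : Squarefree (N : ℤ) := Int.squarefree_natCast.2 hN
  rw [← hden]
  constructor
  · calc _ ≤ 2 * (2 * N ^ 2) * (e (k + 2) * e k) := by
          have hpos : 0 < 2 * (N : ℤ) ^ 2 := by have := hNZ.ne_zero; positivity
          have hγ_le := Int.le_of_dvd hpos ((abs_dvd _ _).2 (hγ.dvd_two_mul_sq hNZ))
          exact le_two_mul_mul_of_abs_le hγ_le hd hsub hle
      _ = 4 * N ^ 2 * (e (k + 2) * e k) := by ring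
  · intro heven
    obtain ⟨hsqx, hsqxN⟩ := isSquare_xCoord_nsmul hP (by lia) heven
    have hγ2 : γ ∣ 2 := hγ.dvd_two hNZ (Rat.isSquare_iff.1 hsqx).1
      (isSquare_num_sub_mul_den hsqx (by exact_mod_cast hsqxN))
    have hγ_le := Int.le_of_dvd two_pos ((abs_dvd _ _).2 hγ2)
    exact le_two_mul_mul_of_abs_le hγ_le hd hsub hle

theorem den_xCoord_nsmul_ne_one {n : ℕ} (hna : (n : ℤ) ^ 2 * N ≤ a) (hn : 3 ≤ n) :
    (xCoord (n • P)).den ≠ 1 := by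
  choose e he hden using fun k : ℕ ↦ exists_den_xCoord_eq_sq (k • P)
  have hN0 : 0 < N := Nat.pos_of_ne_zero hN.ne_zero
  have h4 : 4 * (N : ℤ) < a := by
    have h9 : (3 : ℤ) ^ 2 * N ≤ n ^ 2 * N := by gcongr; exact_mod_cast hn
    lia
  have he₁ : e 1 = 1 := by
    have h1 : e 1 ^ 2 = 1 := by rw [← hden, one_nsmul, ha]; simp
    nlinarith [he 1]
  have hbound {k : ℕ} (hk : 1 ≤ k) (hkn : k + 1 < n) :=
    mul_sq_le_of_den_xCoord_nsmul hP hN ha he hden hk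
      (ha ▸ two_mul_xCoord_nsmul_le hP (by rw [ha]; exact_mod_cast hna) (by lia) hkn.le)
  have hlt : 1 < e n := one_lt_of_mul_sq_le (by exact_mod_cast hN0) h4 he he₁ hn
    (fun k hk hkn ↦ (hbound hk hkn).1) (fun k hk hkn ↦ (hbound hk hkn).2)
  intro h1
  have hn1 : e n ^ 2 = 1 := by rw [← hden, h1, Nat.cast_one]
  exact (one_lt_pow₀ hlt two_ne_zero).ne' hn1

end Multiples

end congruentCurve

theorem stmt9_general (N : ℕ) (hsq : Squarefree N) (a : ℤ) (b : ℚ)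
    (h : (congruentCurve N).Nonsingular (a : ℚ) b)
    (hP : ¬ IsOfFinAddOrder (WeierstrassCurve.Affine.Point.some _ _ h))
    (n : ℤ) (hn : 3 ≤ n)
    (hint : IsIntegralPoint (n • (WeierstrassCurve.Affine.Point.some _ _ h))) :
    |a| < n ^ 2 * (N : ℤ) := by
  lift n to ℕ using by lia
  have hN : 0 < N := Nat.pos_of_ne_zero hsq.ne_zero
  refine abs_lt.2 ⟨?_, ?_⟩
  · have hneg : -(N : ℤ) ≤ a := by
      have := congruentCurve.neg_le_xCoord (.some _ _ h)
      rw [congruentCurve.xCoord_some] at this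
      exact_mod_cast this
    have : (3 : ℤ) ^ 2 * N ≤ n ^ 2 * N := by gcongr
    lia
  · by_contra! hna
    rw [natCast_zsmul] at hint
    exact congruentCurve.den_xCoord_nsmul_ne_one hP hsq rfl (by exact_mod_cast hna)
      (by exact_mod_cast hn) (congruentCurve.den_xCoord_of_isIntegralPoint hint)

theorem stmt9 (N : ℕ) (hN : 0 < N) (hsq : Squarefree N)
    (a b : ℤ) (h : (congruentCurve N).Nonsingular (a : ℚ) (b : ℚ))
    (hPtors : ∀ m : ℤ, 1 ≤ m →
      m • (WeierstrassCurve.Affine.Point.some _ _ h) ≠ 0)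
    (n : ℤ) (hn : 3 ≤ n) (hnodd : Odd n)
    (hint : IsIntegralPoint (n • (WeierstrassCurve.Affine.Point.some _ _ h))) :
    a < n ^ 2 * (N : ℤ) ∧ |a| < n ^ 2 * (N : ℤ) := by
  have hlt := stmt9_general N hsq a b h (fun hfin ↦ hPtors (addOrderOf _)
    (mod_cast hfin.addOrderOf_pos) (by rw [natCast_zsmul, addOrderOf_nsmul_eq_zero])) n hn hint
  exact ⟨(le_abs_self a).trans_lt hlt, hlt⟩
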